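/- The normalized moment sequence (c_j) satisfies, for every j ≥ n−d, the linear recurrence c_{d+j} − e_1(x_1,…,x_n) c_{d+j−1} + e_2(x_1,…,x_n) c_{d+j−2} − ⋯ + (−1)^n e_n(x_1,…,x_n) c_{d+j−n} = 0, i.e. Σ_{k=0}^{n} (−1)^k e_k(x_1,…,x_n) c_{d+j−k} = 0. -/

import Mathlib

open Finset

/-- The complete homogeneous symmetric polynomial of degree `j` evaluated at
`v : Fin m → ℝ` (sum of all monomials of total degree `j`, with `hsymm 0 v = 1`). -/
noncomputable def hsymm {m : ℕ} (j : ℕ) (v : Fin m → ℝ) : ℝ :=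
  haveI := Classical.decPred (fun f : Fin j → Fin m => Monotone f)
  ∑ f ∈ Finset.univ.filter (fun f : Fin j → Fin m => Monotone f), ∏ i, v (f i)

/-- The normalized moment sequence: `c_j = 0` for `j < d` and
`c_{d+j} = Σ_{i=1}^{n-d} α_i h_j(x_i, …, x_{i+d})`. -/
noncomputable def cseq (d n : ℕ) (x : Fin n → ℝ) (α : Fin (n - d) → ℝ) (j : ℕ) : ℝ :=
  if d ≤ j then
    ∑ i : Fin (n - d), α i * hsymm (j - d)
      (fun k : Fin (d + 1) => x ⟨i.1 + k.1, by have h1 := i.2; have h2 := k.2; omega⟩)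
  else 0

/-- The elementary symmetric polynomial `e_k(x_1,…,x_n)` (with `e_0 = 1`). -/
noncomputable def esymmVal (n : ℕ) (x : Fin n → ℝ) (k : ℕ) : ℝ :=
  ∑ t ∈ Finset.powersetCard k (Finset.univ : Finset (Fin n)), ∏ r ∈ t, x r

lemma hsymm_zero_deg {m : ℕ} (v : Fin m → ℝ) : hsymm 0 v = 1 := by
  have h : ∀ f : Fin 0 → Fin m, Monotone f := fun f a => a.elim0
  simp [hsymm, h]

lemma hsymm_empty (j : ℕ) (v : Fin 0 → ℝ) : hsymm (j + 1) v = 0 := by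
  unfold hsymm
  apply Finset.sum_eq_zero
  intro f _
  exact (f 0).elim0

lemma hsymm_rec {m : ℕ} (j : ℕ) (v : Fin (m + 1) → ℝ) :
    hsymm (j + 1) v = v 0 * hsymm j v + hsymm (j + 1) (fun i => v i.succ) := by
  classical
  unfold hsymm
  rw [← Finset.sum_filter_add_sum_filter_not _ (fun f : Fin (j + 1) → Fin (m + 1) => f 0 = 0)]
  congr 1
  · rw [Finset.mul_sum]
    symm
    refine Finset.sum_bij' (fun g _ => (Fin.cons 0 g : Fin (j + 1) → Fin (m + 1)))
      (fun f _ => Fin.tail f) ?_ ?_ ?_ ?_ ?_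
    · intro g hg
      simp only [Finset.mem_filter, Finset.mem_univ, true_and] at hg ⊢
      refine ⟨?_, by simp⟩
      intro a b hab
      induction a using Fin.cases with
      | zero => simp
      | succ a =>
        induction b using Fin.cases with
        | zero => simp at hab
        | succ b => simpa using hg (Fin.succ_le_succ_iff.mp hab)
    · intro f hf
      simp only [Finset.mem_filter, Finset.mem_univ, true_and] at hf ⊢
      intro a b hab
      exact hf.1 (Fin.succ_le_succ_iff.mpr hab)
    · intro g hg
      simp
    · intro f hf
      simp only [Finset.mem_filter, Finset.mem_univ, true_and] at hf
      have := Fin.cons_self_tail f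
      rw [hf.2] at this
      exact this
    · intro g hg
      rw [Fin.prod_univ_succ]
      simp
  · symm
    refine Finset.sum_bij (fun g _ => fun i => (g i).succ) ?_ ?_ ?_ ?_
    · intro g hg
      simp only [Finset.mem_filter, Finset.mem_univ, true_and] at hg ⊢
      exact ⟨fun a b hab => Fin.succ_le_succ_iff.mpr (hg hab), Fin.succ_ne_zero _⟩
    · intro g _ g' _ h
      funext i
      exact Fin.succ_injective _ (congrFun h i)
    · intro f hf
      simp only [Finset.mem_filter, Finset.mem_univ, true_and] at hf
      have h0 : ∀ i, f i ≠ 0 := by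
        intro i hi
        have := hf.1 (Fin.zero_le i)
        rw [hi] at this
        exact hf.2 (Fin.le_zero_iff.mp this)
      refine ⟨fun i => (f i).pred (h0 i), ?_, ?_⟩
      · simp only [Finset.mem_filter, Finset.mem_univ, true_and]
        intro a b hab
        exact Fin.pred_le_pred_iff.mpr (hf.1 hab)
      · funext i
        simp
    · intro g _
      rfl

/-- Generating function identity. -/
lemma prod_mul_gen {m : ℕ} (v : Fin m → ℝ) :
    (∏ i, (1 - PowerSeries.C (v i) * PowerSeries.X)) *
      PowerSeries.mk (fun j => hsymm j v) = 1 := by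
  induction m with
  | zero =>
    ext j
    cases j with
    | zero => simp [hsymm_zero_deg]
    | succ j => simp [hsymm_empty, PowerSeries.coeff_one]
  | succ m ih =>
    have key : (1 - PowerSeries.C (v 0) * PowerSeries.X) * PowerSeries.mk (fun j => hsymm j v)
        = PowerSeries.mk (fun j => hsymm j (fun i : Fin m => v i.succ)) := by
      ext j
      cases j with
      | zero => simp [sub_mul, mul_assoc, hsymm_zero_deg]
      | succ j =>
        simp [sub_mul, mul_assoc, PowerSeries.coeff_succ_X_mul, hsymm_rec]
    rw [Fin.prod_univ_succ, mul_comm (1 - _), mul_assoc, key, ih]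

lemma coeff_prod_esymm (n : ℕ) (x : Fin n → ℝ) (k : ℕ) :
    (∏ i, (1 - Polynomial.C (x i) * Polynomial.X)).coeff k = (-1 : ℝ) ^ k * esymmVal n x k := by
  classical
  have h : (∏ i, (1 - Polynomial.C (x i) * Polynomial.X))
      = ∑ t ∈ (Finset.univ : Finset (Fin n)).powerset,
        Polynomial.C ((-1) ^ t.card * ∏ r ∈ t, x r) * Polynomial.X ^ t.card := by
    simp_rw [sub_eq_add_neg]
    rw [Finset.prod_one_add]
    refine Finset.sum_congr rfl fun t _ => ?_
    rw [Finset.prod_neg, Finset.prod_mul_distrib]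
    simp [mul_assoc]
  rw [h, Polynomial.finset_sum_coeff, esymmVal, Finset.mul_sum,
    Finset.powersetCard_eq_filter, Finset.sum_filter]
  refine Finset.sum_congr rfl fun t _ => ?_
  rw [Polynomial.coeff_C_mul_X_pow]
  by_cases hk : t.card = k
  · simp [hk]
  · simp [hk, Ne.symm hk]

lemma sum_window (d n : ℕ) (x : Fin n → ℝ) (i : Fin (n - d))
    (w : Fin (d + 1) → Fin n) (hw : Function.Injective w) (j : ℕ) (hj : n - d ≤ j)
    (hn : d + 1 ≤ n) :
    ∑ k ∈ Finset.range (j + 1),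
      (-1 : ℝ) ^ k * esymmVal n x k * hsymm (j - k) (fun k => x (w k)) = 0 := by
  classical
  set P : Polynomial ℝ := ∏ i, (1 - Polynomial.C (x i) * Polynomial.X) with hP
  set Q : Polynomial ℝ := ∏ i ∈ Finset.univ \ Finset.univ.image w,
    (1 - Polynomial.C (x i) * Polynomial.X) with hQ
  have hPQ : P = Q * ∏ k, (1 - Polynomial.C (x (w k)) * Polynomial.X) := by
    rw [hP, hQ, ← Finset.prod_sdiff (Finset.subset_univ (Finset.univ.image w)),
      Finset.prod_image (fun a _ b _ h => hw h)]
  have hser : (P : PowerSeries ℝ) * PowerSeries.mk (fun j => hsymm j (fun k => x (w k))) = Q := by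
    have hg := prod_mul_gen (fun k => x (w k))
    have hc : ((∏ k, (1 - Polynomial.C (x (w k)) * Polynomial.X) : Polynomial ℝ) : PowerSeries ℝ)
        = ∏ k, (1 - PowerSeries.C (x (w k)) * PowerSeries.X) := by
      rw [← Polynomial.coeToPowerSeries.ringHom_apply, map_prod]
      simp
    rw [hPQ, Polynomial.coe_mul, mul_assoc, hc, hg, mul_one]
  have hdeg : Q.natDegree < j := by
    have h1 : Q.natDegree ≤ ∑ i ∈ Finset.univ \ Finset.univ.image w, 1 := by
      refine (Polynomial.natDegree_prod_le _ _).trans (Finset.sum_le_sum fun i _ => ?_)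
      compute_degree
    have h2 : (Finset.univ \ Finset.univ.image w).card = n - (d + 1) := by
      rw [Finset.card_sdiff_of_subset (Finset.subset_univ _), Finset.card_image_of_injective _ hw]
      simp
    simp [h2] at h1
    omega
  have hco := congrArg (PowerSeries.coeff j) hser
  rw [Polynomial.coeff_coe, Polynomial.coeff_eq_zero_of_natDegree_lt hdeg,
    PowerSeries.coeff_mul, Finset.Nat.sum_antidiagonal_eq_sum_range_succ_mk] at hco
  rw [← hco]
  refine Finset.sum_congr rfl fun k _ => ?_
  simp [hP, Polynomial.coeff_coe, coeff_prod_esymm]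

lemma esymmVal_big (n : ℕ) (x : Fin n → ℝ) (k : ℕ) (h : n < k) : esymmVal n x k = 0 := by
  unfold esymmVal
  rw [Finset.powersetCard_eq_empty.mpr (by simpa using h)]
  simp

/-- **Linear recurrence for the normalized moments.** For every `j ≥ n - d`,
`Σ_{k=0}^{n} (-1)^k e_k(x_1,…,x_n) c_{d+j-k} = 0`. -/
theorem cseq_recurrence (d n : ℕ) (hn : d + 1 ≤ n) (x : Fin n → ℝ)
    (hx : StrictMono x) (α : Fin (n - d) → ℝ) :
    ∀ j : ℕ, n - d ≤ j →
      ∑ k ∈ Finset.range (n + 1),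
        (-1 : ℝ) ^ k * esymmVal n x k * cseq d n x α (d + j - k) = 0 := by
  intro j hj
  have e1 : ∑ k ∈ Finset.range (n + 1),
        (-1 : ℝ) ^ k * esymmVal n x k * cseq d n x α (d + j - k)
      = ∑ k ∈ Finset.range (j + 1),
        (-1 : ℝ) ^ k * esymmVal n x k * cseq d n x α (d + j - k) := by
    trans ∑ k ∈ Finset.range (n + 1) ∩ Finset.range (j + 1),
        (-1 : ℝ) ^ k * esymmVal n x k * cseq d n x α (d + j - k)
    · symm
      refine Finset.sum_subset Finset.inter_subset_left fun k hk hk' => ?_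
      simp only [Finset.mem_inter, Finset.mem_range] at hk hk'
      have : ¬ d ≤ d + j - k := by omega
      simp [cseq, this]
    · refine Finset.sum_subset Finset.inter_subset_right fun k hk hk' => ?_
      simp only [Finset.mem_inter, Finset.mem_range] at hk hk'
      rw [esymmVal_big n x k (by omega)]
      simp
  rw [e1]
  have e2 : ∀ k ∈ Finset.range (j + 1),
      (-1 : ℝ) ^ k * esymmVal n x k * cseq d n x α (d + j - k)
      = ∑ i : Fin (n - d), α i * ((-1 : ℝ) ^ k * esymmVal n x k * hsymm (j - k)
        (fun k : Fin (d + 1) => x ⟨i.1 + k.1, by have h1 := i.2; have h2 := k.2; omega⟩)) := by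
    intro k hk
    rw [Finset.mem_range] at hk
    have h1 : d ≤ d + j - k := by omega
    have h2 : d + j - k - d = j - k := by omega
    rw [cseq, if_pos h1, h2, Finset.mul_sum]
    exact Finset.sum_congr rfl fun i _ => by ring
  rw [Finset.sum_congr rfl e2, Finset.sum_comm]
  refine Finset.sum_eq_zero fun i _ => ?_
  rw [← Finset.mul_sum, sum_window d n x i
    (fun k : Fin (d + 1) => ⟨i.1 + k.1, by have h1 := i.2; have h2 := k.2; omega⟩)
    (fun a b h => by simpa [Fin.ext_iff] using h) j hj hn, mul_zero]
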